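/- Let k be an algebraically closed field of characteristic 0 and let A be a finitely generated commutative k-algebra which is an integral domain. Let J be a non-zero Lie ideal of Der_k(A) and let P be a maximal ideal of A which is a nonsingular point, i.e., the localization A_P is formally smooth over k. Then J is ample at P: for every g ∈ P with g ∉ P², there exists μ ∈ J with μ(g) ∉ P. (Equivalently, the vector fields in J, specialized at P, span the whole tangent space at P.) -/

import Mathlib

set_option synthInstance.maxHeartbeats 400000

/-!
At a nonsingular point `P` the module of differentials is locally free, and `A → A ⧸ P` splits
modulo `P ^ 2`. Together these produce an Euler derivation `E = ∑ xᵢ ∂ᵢ` with `xᵢ ∈ P`, acting on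
`P ^ m ⧸ P ^ (m + 1)` as multiplication by `m`. In characteristic zero, an element of `P ^ m` with
`0 < m` all of whose derivatives lie in `P ^ m` therefore lies in `P ^ (m + 1)`.

If all `μ f` with `μ ∈ J` were in `P`, then `D (μ f) = ⁅D, μ⁆ f + μ (D f)` would push them into
every power of `P`, forcing `J = ⊥` by Krull's intersection theorem. So some `μ f` is outside `P`,
and for `g ∈ P` outside `P ^ 2` some `D g` is outside `P`. As
`μ f * D g = f * ⁅D, μ⁆ g - ⁅f • D, μ⁆ g`, a member of `J` moves `g` out of `P`.
-/

open scoped KaehlerDifferential TensorProduct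

section DualTensorHom

variable {A M : Type*} [CommRing A] [AddCommGroup M] [Module A M]

theorem comp_mem_range_dualTensorHom {N : Type*} [AddCommGroup N] [Module A N] {ι : Type*}
    [Finite ι] (π : (ι → A) →ₗ[A] N) (φ : M →ₗ[A] ι → A) :
    π ∘ₗ φ ∈ LinearMap.range (dualTensorHom A M N) := by
  classical
  have := Fintype.ofFinite ι
  refine ⟨∑ i, (LinearMap.proj i ∘ₗ φ) ⊗ₜ π (Pi.single i 1), LinearMap.ext fun w ↦ ?_⟩
  rw [LinearMap.comp_apply, pi_eq_sum_univ' (φ w)]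
  simp

theorem exists_smul_id_mem_range_dualTensorHom (S : Submonoid A) (B : Type*) [CommRing B]
    [Algebra A B] [IsLocalization S B] [Module.FinitePresentation A M] {M' : Type*}
    [AddCommGroup M'] [Module A M'] [Module B M'] [IsScalarTower A B M'] [Module.Projective B M']
    (f : M →ₗ[A] M') [IsLocalizedModule S f] :
    ∃ s ∈ S, s • LinearMap.id ∈ LinearMap.range (dualTensorHom A M M) := by
  -- A section of the localization of `π` becomes a map `φ` over `A` after clearing denominators.
  obtain ⟨n, π, hπ⟩ := Module.Finite.exists_fin' A M
  let g : (Fin n → A) →ₗ[A] (Fin n → B) :=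
    LinearMap.pi fun i ↦ Algebra.linearMap A B ∘ₗ LinearMap.proj i
  let π' := IsLocalizedModule.mapExtendScalars S g f B π
  obtain ⟨σ, hσ⟩ := Module.projective_lifting_property π' LinearMap.id
    (IsLocalizedModule.map_surjective S g f π hπ)
  obtain ⟨φ, s, hφ⟩ := Module.FinitePresentation.exists_lift_of_isLocalizedModule S g
    (σ.restrictScalars A ∘ₗ f)
  have hf : f ∘ₗ π ∘ₗ φ = f ∘ₗ (s • LinearMap.id) := by
    ext w
    calc f (π (φ w)) = π' (g (φ w)) := (IsLocalizedModule.map_apply S g f π (φ w)).symm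
      _ = π' (s • σ (f w)) := congrArg π' (LinearMap.congr_fun hφ w)
      _ = s • π' (σ (f w)) := by
        simp only [Submonoid.smul_def, ← algebraMap_smul B (s : A), map_smul]
      _ = f (s • w) := by
        rw [show π' (σ (f w)) = f w from LinearMap.congr_fun hσ (f w)]
        exact (map_smul f (s : A) w).symm
  obtain ⟨c, hc⟩ := Module.Finite.exists_smul_of_comp_eq_of_isLocalizedModule S f _ _ hf
  refine ⟨(c * s : S), (c * s).2, ?_⟩
  have hcs : ((c * s : S) : A) • LinearMap.id = (c : A) • (π ∘ₗ φ) := by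
    rw [Submonoid.coe_mul, mul_smul]
    exact hc.symm
  exact hcs ▸ Submodule.smul_mem _ _ (comp_mem_range_dualTensorHom π φ)

theorem dualTensorHom_surjective_of_isTorsionBySet (P : Ideal A) [P.IsMaximal] (B : Type*)
    [CommRing B] [Algebra A B] [IsLocalization.AtPrime B P] [Module.FinitePresentation A M]
    {M' : Type*} [AddCommGroup M'] [Module A M'] [Module B M'] [IsScalarTower A B M']
    [Module.Projective B M'] (f : M →ₗ[A] M') [IsLocalizedModule P.primeCompl f]
    {N : Type*} [AddCommGroup N] [Module A N] (hN : Module.IsTorsionBySet A N P) :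
    Function.Surjective (dualTensorHom A M N) := by
  intro l
  obtain ⟨s, hs, z, hz⟩ := exists_smul_id_mem_range_dualTensorHom P.primeCompl B f
  obtain ⟨t, p, hp, hts⟩ := Ideal.IsMaximal.exists_inv ‹P.IsMaximal› hs
  refine ⟨t • l.lTensor _ z, LinearMap.ext fun w ↦ ?_⟩
  have hsw : dualTensorHom A M N (l.lTensor _ z) = s • l := by
    rw [← LinearMap.comp_apply, dualTensorHom_comp_lTensor, LinearMap.comp_apply, hz]
    ext; simp
  calc dualTensorHom A M N (t • l.lTensor _ z) w = (t * s) • l w := by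
        rw [map_smul, hsw, LinearMap.smul_apply, LinearMap.smul_apply, mul_smul]
    _ = (t * s + p) • l w := by rw [add_smul, @hN (l w) ⟨p, hp⟩, add_zero]
    _ = l w := by rw [hts, one_smul]

end DualTensorHom

section EulerDerivation

variable {R A : Type*} [CommRing R] [CommRing A] [Algebra R A]

/-- An Euler derivation at `P`: a derivation of the form `∑ xᵢ • Dᵢ` with `xᵢ ∈ P` which induces
the identity on `P ⧸ P ^ 2`, such as `∑ xᵢ • ∂/∂xᵢ` for local coordinates `xᵢ` at a smooth point.
The condition `E ∈ P • ⊤` encodes the sum without naming coordinates. -/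
structure IsEulerDerivation (P : Ideal A) (E : Derivation R A A) : Prop where
  mem_smul_top : E ∈ P • (⊤ : Submodule A (Derivation R A A))
  apply_sub_self_mem : ∀ y ∈ P, E y - y ∈ P ^ 2

variable {P : Ideal A}

theorem apply_mem_mul_of_mem_smul_top {E : Derivation R A A}
    (hE : E ∈ P • (⊤ : Submodule A (Derivation R A A))) {I : Ideal A} {h : A}
    (hI : ∀ D : Derivation R A A, D h ∈ I) : E h ∈ P * I := by
  induction hE using Submodule.smul_induction_on' with
  | smul p hp D _ => exact Ideal.mul_mem_mul hp (hI D)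
  | add E₁ _ E₂ _ h₁ h₂ => exact add_mem h₁ h₂

variable (R P) in
theorem exists_derivation_apply_eq_toCotangent [Algebra.FormallySmooth R (A ⧸ P)] :
    ∃ d : Derivation R A P.Cotangent, ∀ y : P, d y = P.toCotangent y := by
  let I := P.cotangentIdeal
  let q : A ⧸ P →ₐ[R] (A ⧸ P ^ 2) ⧸ I :=
    Ideal.Quotient.liftₐ P (IsScalarTower.toAlgHom R A ((A ⧸ P ^ 2) ⧸ I)) fun y hy ↦
      Ideal.Quotient.eq_zero_iff_mem.mpr (Ideal.mk_mem_cotangentIdeal.mpr hy)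
  obtain ⟨σ, hσ⟩ := Algebra.FormallySmooth.exists_lift I ⟨2, P.cotangentIdeal_square⟩ q
  -- `σ` is a section of `A ⧸ P ^ 2 → A ⧸ P`, and the derivation is `a ↦ a - σ a`.
  let d := derivationToSquareZeroOfLift I P.cotangentIdeal_square
    (σ.comp (Ideal.Quotient.mkₐ R P)) (by rw [← AlgHom.comp_assoc, hσ]; rfl)
  refine ⟨P.cotangentEquivIdeal.symm.toLinearMap.compDer (-d), fun y ↦ ?_⟩
  have hσy : σ (Ideal.Quotient.mk P y) = 0 := by
    rw [Ideal.Quotient.eq_zero_iff_mem.mpr y.2, map_zero]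
  have hdy : (-d) y = ⟨(P ^ 2).mkQ y, Submodule.mem_map_of_mem y.2⟩ := by
    ext
    simp [d, derivationToSquareZeroOfLift_apply, hσy]
  exact (congrArg _ hdy).trans (P.cotangentEquivIdeal_symm_apply y y.2)

theorem exists_mem_smul_top_dualTensorHom_eq_mk (z : Module.Dual A Ω[A⁄R] ⊗[A] P.Cotangent) :
    ∃ E ∈ P • (⊤ : Submodule A (Derivation R A A)), ∀ a,
      P.cotangentToQuotientSquare (dualTensorHom A _ _ z (KaehlerDifferential.D R A a)) =
        Ideal.Quotient.mk (P ^ 2) (E a) := by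
  induction z with
  | zero => exact ⟨0, zero_mem _, fun a ↦ by simp⟩
  | tmul φ c =>
    obtain ⟨x, rfl⟩ := P.toCotangent_surjective c
    refine ⟨(x : A) • φ.compDer (KaehlerDifferential.D R A), Submodule.smul_mem_smul x.2 trivial,
      fun a ↦ ?_⟩
    rw [dualTensorHom_apply, map_smul, Ideal.toCotangent_to_quotient_square, ← map_smul]
    exact congrArg _ (mul_comm _ _)
  | add z₁ z₂ h₁ h₂ =>
    obtain ⟨E₁, hE₁, h₁⟩ := h₁
    obtain ⟨E₂, hE₂, h₂⟩ := h₂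
    exact ⟨E₁ + E₂, add_mem hE₁ hE₂, fun a ↦ by simp [h₁, h₂]⟩

variable (R P) in
theorem exists_isEulerDerivation [P.IsMaximal] (B : Type*) [CommRing B] [Algebra R B] [Algebra A B]
    [IsScalarTower R A B] [IsLocalization.AtPrime B P] [Module.FinitePresentation A Ω[A⁄R]]
    [Module.Projective B Ω[B⁄R]] [Algebra.FormallySmooth R (A ⧸ P)] :
    ∃ E : Derivation R A A, IsEulerDerivation P E := by
  obtain ⟨d, hd⟩ := exists_derivation_apply_eq_toCotangent R P
  have : IsLocalizedModule P.primeCompl (KaehlerDifferential.map R R A B) :=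
    KaehlerDifferential.isLocalizedModule_map R A B P.primeCompl
  obtain ⟨z, hz⟩ := dualTensorHom_surjective_of_isTorsionBySet P B
    (KaehlerDifferential.map R R A B) P.isTorsionBySet_cotangent d.liftKaehlerDifferential
  obtain ⟨E, hE, hEz⟩ := exists_mem_smul_top_dualTensorHom_eq_mk z
  refine ⟨E, hE, fun y hy ↦ Ideal.Quotient.eq.mp ?_⟩
  rw [← hEz, hz, Derivation.liftKaehlerDifferential_comp_D, hd ⟨y, hy⟩]
  rfl

variable {E : Derivation R A A}

theorem IsEulerDerivation.apply_sub_natCast_mul_mem_pow (hE : IsEulerDerivation P E) {m : ℕ} {h : A}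
    (hh : h ∈ P ^ m) : E h - m * h ∈ P ^ (m + 1) := by
  induction m generalizing h with
  | zero =>
    simpa using apply_mem_mul_of_mem_smul_top hE.mem_smul_top (I := ⊤) (h := h) fun _ ↦ trivial
  | succ m ih =>
    rw [pow_succ] at hh
    induction hh using Submodule.mul_induction_on' with
    | mem_mul_mem a ha b hb =>
      have hab : a * (E b - b) ∈ P ^ (m + 1 + 1) := by
        rw [add_assoc, pow_add]
        exact Ideal.mul_mem_mul ha (hE.apply_sub_self_mem b hb)
      have hba : (E a - m * a) * b ∈ P ^ (m + 1 + 1) := by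
        rw [pow_succ]
        exact Ideal.mul_mem_mul (ih ha) hb
      convert add_mem hab hba using 1
      simp only [Derivation.leibniz, smul_eq_mul, Nat.cast_succ]
      ring
    | add a _ b _ ha hb =>
      convert add_mem ha hb using 1
      rw [map_add]
      ring

theorem IsEulerDerivation.mem_pow_succ_of_forall_apply_mem_pow [Algebra ℚ A]
    (hE : IsEulerDerivation P E) {m : ℕ} (hm : m ≠ 0) {h : A} (hh : h ∈ P ^ m)
    (hD : ∀ D : Derivation R A A, D h ∈ P ^ m) : h ∈ P ^ (m + 1) := by
  have hEh : E h ∈ P ^ (m + 1) := by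
    rw [pow_succ']
    exact apply_mem_mul_of_mem_smul_top hE.mem_smul_top hD
  have hmh : (m : A) * h ∈ P ^ (m + 1) := by
    simpa using sub_mem hEh (hE.apply_sub_natCast_mul_mem_pow hh)
  have hu : IsUnit (m : A) := by
    simpa using (Nat.cast_ne_zero.mpr hm : (m : ℚ) ≠ 0).isUnit.map (algebraMap ℚ A)
  exact (Ideal.unit_mul_mem_iff_mem _ hu).mp hmh

end EulerDerivation

section LieIdeal

variable {R A : Type*} [CommRing R] [CommRing A] [Algebra R A] {P : Ideal A}
  {J : LieIdeal R (Derivation R A A)} {E : Derivation R A A}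

theorem IsEulerDerivation.apply_mem_pow_of_forall_apply_mem [Algebra ℚ A]
    (hE : IsEulerDerivation P E) (hJ : ∀ μ ∈ J, ∀ f, μ f ∈ P) (m : ℕ) :
    ∀ μ ∈ J, ∀ f, μ f ∈ P ^ (m + 1) := by
  induction m with
  | zero => simpa using hJ
  | succ m ih =>
    intro μ hμ f
    refine hE.mem_pow_succ_of_forall_apply_mem_pow m.succ_ne_zero (ih μ hμ f) fun D ↦ ?_
    have hDμ : D (μ f) = ⁅D, μ⁆ f + μ (D f) := by
      rw [Derivation.commutator_apply, sub_add_cancel]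
    exact hDμ ▸ add_mem (ih _ (lie_mem_right R _ J D μ hμ) f) (ih μ hμ (D f))

theorem IsEulerDerivation.exists_mem_lieIdeal_apply_notMem [Algebra ℚ A]
    (hE : IsEulerDerivation P E) (hP : ⨅ n : ℕ, P ^ n = ⊥) (hJ : J ≠ ⊥) :
    ∃ μ ∈ J, ∃ f, μ f ∉ P := by
  contrapose! hJ
  refine (LieSubmodule.eq_bot_iff J).mpr fun μ hμ ↦ Derivation.ext fun f ↦ ?_
  suffices μ f ∈ ⨅ n : ℕ, P ^ n by simpa [hP] using this
  exact Submodule.mem_iInf _ |>.mpr fun n ↦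
    Ideal.pow_le_pow_right n.le_succ (hE.apply_mem_pow_of_forall_apply_mem hJ n μ hμ f)

theorem apply_mul_apply_mem_of_forall_lieIdeal {g : A} (hg : ∀ ν ∈ J, ν g ∈ P)
    {μ : Derivation R A A} (hμ : μ ∈ J) (f : A) (D : Derivation R A A) : μ f * D g ∈ P := by
  have hfD : μ f * D g = f * ⁅D, μ⁆ g - ⁅f • D, μ⁆ g := by
    simp only [Derivation.commutator_apply, Derivation.smul_apply, smul_eq_mul, Derivation.leibniz]
    ring
  rw [hfD]
  exact sub_mem (P.mul_mem_left f (hg _ (lie_mem_right R _ J D μ hμ)))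
    (hg _ (lie_mem_right R _ J (f • D) μ hμ))

end LieIdeal

theorem lie_ideal_ample_at_nonsingular_point_general
    {k A : Type*} [Field k] [CharZero k] [CommRing A] [IsDomain A] [Algebra k A]
    [Algebra.EssFiniteType k A] {J : LieIdeal k (Derivation k A A)} (hJ : J ≠ ⊥)
    (P : Ideal A) [P.IsMaximal] [Algebra.FormallySmooth k (Localization.AtPrime P)] :
    ∀ g ∈ P, g ∉ P ^ 2 → ∃ μ ∈ J, μ g ∉ P := by
  intro g hg hg2
  have : IsNoetherianRing A := Algebra.EssFiniteType.isNoetherianRing k A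
  have : Module.FinitePresentation A Ω[A⁄k] := Module.finitePresentation_of_finite _ _
  let : Field (A ⧸ P) := Ideal.Quotient.field P
  have : Algebra.EssFiniteType k (A ⧸ P) := .comp k A (A ⧸ P)
  let : Algebra ℚ A := Algebra.compHom A (algebraMap ℚ k)
  obtain ⟨E, hE⟩ := exists_isEulerDerivation k P (Localization.AtPrime P)
  obtain ⟨μ, hμ, f, hμf⟩ := hE.exists_mem_lieIdeal_apply_notMem
    (Ideal.iInf_pow_eq_bot_of_isDomain P (Ideal.IsPrime.ne_top inferInstance)) hJ
  obtain ⟨D, hDg⟩ : ∃ D : Derivation k A A, D g ∉ P := by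
    contrapose! hg2
    simpa using hE.mem_pow_succ_of_forall_apply_mem_pow one_ne_zero (by simpa using hg)
      (by simpa using hg2)
  by_contra! hJg
  exact (Ideal.IsPrime.mem_or_mem inferInstance
    (apply_mul_apply_mem_of_forall_lieIdeal hJg hμ f D)).elim hμf hDg

/-- Every non-zero Lie ideal of `Der_k(A)` is ample at a nonsingular point `P`: for every
`g ∈ P \ P²` some derivation in the ideal sends `g` outside `P` (i.e. the vector fields in
the ideal, specialized at `P`, span the tangent space at `P`). -/
theorem lie_ideal_ample_at_nonsingular_point.{u}
    (k : Type u) [Field k] [IsAlgClosed k] [CharZero k]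
    (A : Type u) [CommRing A] [IsDomain A] [Algebra k A] [Algebra.FiniteType k A]
    (J : LieIdeal k (Derivation k A A)) (hJ : J ≠ ⊥)
    (P : Ideal A) [P.IsMaximal]
    (hsmooth : Algebra.FormallySmooth k (Localization.AtPrime P)) :
    ∀ g ∈ P, g ∉ P ^ 2 → ∃ μ ∈ J, μ g ∉ P :=
  lie_ideal_ample_at_nonsingular_point_general hJ P
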